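/- arXiv:2403.08418 — 14 statements merged into one kernel-verified Lean document; each statement's English description precedes it below -/
import Mathlib

section
/- Let V₁ and V₂ be partial isometries on a complex Hilbert space H. Then the following are equivalent: (1) the product V₁V₂ is a partial isometry; (2) V₂V₂* maps the range of V₁* into the range of V₁*; (3) V₁*V₁ maps the range of V₂ into the range of V₂; (4) the operator (V₁*V₁)(V₂V₂*) is idempotent. -/
open ContinuousLinearMap

/-- A bounded operator `V` on a Hilbert space is a partial isometry if it is isometric
on the orthogonal complement of its kernel. -/
def IsPartialIsometry {H : Type*} [NormedAddCommGroup H] [InnerProductSpace ℂ H]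
    [CompleteSpace H] (V : H →L[ℂ] H) : Prop :=
  ∀ x ∈ (LinearMap.ker (V : H →ₗ[ℂ] H))ᗮ, ‖V x‖ = ‖x‖

theorem isPartialIsometry_iff_aux {H : Type*} [NormedAddCommGroup H] [InnerProductSpace ℂ H]
    [CompleteSpace H] (V : H →L[ℂ] H) : IsPartialIsometry V ↔ V * star V * V = V := by
  constructor
  · intro h
    have hc : IsClosed ((LinearMap.ker (V : H →ₗ[ℂ] H) : Submodule ℂ H) : Set H) :=
      ContinuousLinearMap.isClosed_ker V
    haveI : CompleteSpace (LinearMap.ker (V : H →ₗ[ℂ] H)) := hc.completeSpace_coe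
    set K : Submodule ℂ H := LinearMap.ker (V : H →ₗ[ℂ] H) with hK
    have hV : ∀ x, V (Kᗮ.starProjection x) = V x := by
      intro x
      have h1 : K.starProjection x ∈ K := K.starProjection_apply_mem x
      have h2 : V (K.starProjection x) = 0 := h1
      have h3 := K.starProjection_add_starProjection_orthogonal x
      calc V (Kᗮ.starProjection x) = V (K.starProjection x + Kᗮ.starProjection x) := by
            rw [map_add, h2, zero_add]
        _ = V x := by rw [h3]
    have hP : star V * V = Kᗮ.starProjection := by
      have : ((star V * V - Kᗮ.starProjection : H →L[ℂ] H) : H →ₗ[ℂ] H) = 0 := by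
        rw [← inner_map_self_eq_zero]
        intro x
        have e1 : inner ℂ ((star V * V) x) x = ((‖V x‖ : ℂ)) ^ 2 := by
          change inner ℂ (adjoint V (V x)) x = _
          rw [adjoint_inner_left, inner_self_eq_norm_sq_to_K]; rfl
        have e2 : inner ℂ (Kᗮ.starProjection x) x = ((‖Kᗮ.starProjection x‖ : ℂ)) ^ 2 := by
          have := Submodule.inner_starProjection_left_eq_right Kᗮ (Kᗮ.starProjection x) x
          rw [← Submodule.starProjection_eq_self_iff.2 (Kᗮ.starProjection_apply_mem x), this,
            inner_self_eq_norm_sq_to_K,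
            Submodule.starProjection_eq_self_iff.2 (Kᗮ.starProjection_apply_mem x)]; rfl
        change inner ℂ ((star V * V) x - Kᗮ.starProjection x) x = 0
        rw [inner_sub_left, e1, e2, ← hV x, h _ (Kᗮ.starProjection_apply_mem x), sub_self]
      ext x
      have := LinearMap.congr_fun this x
      exact sub_eq_zero.1 this
    rw [mul_assoc, hP]
    ext x
    exact hV x
  · intro h x hx
    have hk : x - adjoint V (V x) ∈ LinearMap.ker (V : H →ₗ[ℂ] H) := by
      change V (x - adjoint V (V x)) = 0
      have : V (adjoint V (V x)) = V x := congrArg (fun T : H →L[ℂ] H => T x) h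
      rw [map_sub, this, sub_self]
    have hk' : x - adjoint V (V x) ∈ (LinearMap.ker (V : H →ₗ[ℂ] H))ᗮ := by
      refine Submodule.sub_mem _ hx ?_
      rw [Submodule.mem_orthogonal]
      intro u hu
      have hu : V u = 0 := hu
      rw [adjoint_inner_right, hu, inner_zero_left]
    have h0 := Submodule.inner_right_of_mem_orthogonal hk hk'
    rw [inner_self_eq_zero, sub_eq_zero] at h0
    have h3 : inner ℂ (V x) (V x) = inner ℂ x x := by
      rw [← adjoint_inner_right, ← h0]
    rw [inner_self_eq_norm_sq_to_K, inner_self_eq_norm_sq_to_K] at h3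
    have h4 : ‖V x‖ ^ 2 = ‖x‖ ^ 2 := by exact_mod_cast h3
    exact (sq_eq_sq₀ (norm_nonneg _) (norm_nonneg _)).1 h4

/-- If `W * star W * W = W` then `T` maps `range W` to itself iff `W W* T W W* = T W W*`. -/
theorem range_invariant_aux {H : Type*} [NormedAddCommGroup H] [InnerProductSpace ℂ H]
    [CompleteSpace H] (W T : H →L[ℂ] H) (h : W * star W * W = W) :
    (∀ x ∈ LinearMap.range (W : H →ₗ[ℂ] H), T x ∈ LinearMap.range (W : H →ₗ[ℂ] H)) ↔
      (W * star W) * T * (W * star W) = T * (W * star W) := by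
  constructor
  · intro hT
    ext x
    obtain ⟨y, hy⟩ := hT (W (star W x)) ⟨star W x, rfl⟩
    have hy : W y = T (W (star W x)) := hy
    change W (star W (T (W (star W x)))) = T (W (star W x))
    rw [← hy]
    exact congrArg (fun S : H →L[ℂ] H => S y) h
  · rintro hT _ ⟨y, rfl⟩
    have e : (W * star W) * T * W = T * W := by
      have := congrArg (· * W) hT
      simpa only [mul_assoc, ← mul_assoc W (star W) W, h] using this
    exact ⟨star W (T (W y)), congrArg (fun S : H →L[ℂ] H => S y) e⟩

/-- For self-adjoint idempotents, `PQ` idempotent iff `PQP = QP`. -/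
theorem proj_aux {A : Type*} [NonUnitalNormedRing A] [StarRing A] [CStarRing A] (P Q : A)
    (hP : P * P = P) (hQ : Q * Q = Q) (sP : star P = P) (sQ : star Q = Q) :
    P * Q * P = Q * P ↔ IsIdempotentElem (P * Q) := by
  constructor
  · intro h
    have h' := congrArg star h
    simp only [star_mul, sP, sQ] at h'
    have hc : P * Q = Q * P := by rw [← h', ← mul_assoc, h]
    unfold IsIdempotentElem
    rw [← mul_assoc, h, ← hc, mul_assoc, hQ]
  · intro h
    unfold IsIdempotentElem at h
    have h0 : star (Q * P - P * Q * P) * (Q * P - P * Q * P) = 0 := by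
      simp only [star_sub, star_mul, sP, sQ]
      have e1 : P * Q * (Q * P) = P * Q * P := by
        rw [mul_assoc, ← mul_assoc Q Q P, hQ, mul_assoc]
      have e2 : P * Q * (P * Q * P) = P * Q * P := by
        rw [← mul_assoc, h]
      have e3 : P * (Q * P) * (Q * P) = P * Q * P := by
        calc P * (Q * P) * (Q * P) = (P * Q) * (P * Q) * P := by simp only [mul_assoc]
          _ = _ := by rw [h]
      have e4 : P * (Q * P) * (P * Q * P) = P * Q * P := by
        calc P * (Q * P) * (P * Q * P) = P * Q * (P * P) * Q * P := by simp only [mul_assoc]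
          _ = (P * Q) * (P * Q) * P := by rw [hP]; simp only [mul_assoc]
          _ = _ := by rw [h]
      rw [sub_mul, mul_sub, mul_sub, e1, e2, e3, e4]
      simp
    have := (CStarRing.star_mul_self_eq_zero_iff _).1 h0
    exact (sub_eq_zero.1 this).symm

theorem stmt_0 {H : Type*} [NormedAddCommGroup H] [InnerProductSpace ℂ H] [CompleteSpace H]
    (V₁ V₂ : H →L[ℂ] H) (h₁ : IsPartialIsometry V₁) (h₂ : IsPartialIsometry V₂) :
    List.TFAE
      [IsPartialIsometry (V₁ * V₂),
       ∀ x ∈ LinearMap.range (adjoint V₁ : H →ₗ[ℂ] H), (V₂ * adjoint V₂) x ∈ LinearMap.range (adjoint V₁ : H →ₗ[ℂ] H),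
       ∀ x ∈ LinearMap.range (V₂ : H →ₗ[ℂ] H), (adjoint V₁ * V₁) x ∈ LinearMap.range (V₂ : H →ₗ[ℂ] H),
       IsIdempotentElem ((adjoint V₁ * V₁) * (V₂ * adjoint V₂))] := by
  rw [isPartialIsometry_iff_aux] at h₁ h₂
  rw [isPartialIsometry_iff_aux]
  simp only [← star_eq_adjoint]
  have h₁' : star V₁ * star (star V₁) * star V₁ = star V₁ := by
    have := congrArg star h₁
    simpa only [star_mul, star_star, mul_assoc] using this
  rw [range_invariant_aux (star V₁) (V₂ * star V₂) h₁',
    range_invariant_aux V₂ (star V₁ * V₁) h₂, star_star]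
  have a1 : V₁ * (star V₁ * V₁) = V₁ := by rw [← mul_assoc, h₁]
  have hP : (star V₁ * V₁) * (star V₁ * V₁) = star V₁ * V₁ := by rw [mul_assoc, a1]
  have hQ : (V₂ * star V₂) * (V₂ * star V₂) = V₂ * star V₂ := by rw [← mul_assoc, h₂]
  have sP : star (star V₁ * V₁) = star V₁ * V₁ := by simp
  have sQ : star (V₂ * star V₂) = V₂ * star V₂ := by simp
  have k1 := proj_aux _ _ hP hQ sP sQ
  have k2 := proj_aux _ _ hQ hP sQ sP
  have k3 : IsIdempotentElem ((V₂ * star V₂) * (star V₁ * V₁)) ↔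
      IsIdempotentElem ((star V₁ * V₁) * (V₂ * star V₂)) := by
    unfold IsIdempotentElem
    rw [← star_inj, star_mul, star_mul (V₂ * star V₂), sP, sQ]
  tfae_have 2 ↔ 4 := k1
  tfae_have 3 ↔ 4 := k2.trans k3
  tfae_have 1 → 4 := by
    intro h
    have := congrArg (fun T => star V₁ * T * star V₂) h
    simp only [star_mul, mul_assoc] at this
    simpa only [IsIdempotentElem, mul_assoc] using this
  tfae_have 4 → 1 := by
    intro h
    have h : _ * _ = _ := h
    have := congrArg (fun T => V₁ * T * V₂) h
    calc V₁ * V₂ * star (V₁ * V₂) * (V₁ * V₂)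
        = V₁ * (V₂ * star V₂) * (star V₁ * V₁) * V₂ := by simp only [star_mul, mul_assoc]
      _ = (V₁ * (star V₁ * V₁)) * (V₂ * star V₂) * (star V₁ * V₁) * (V₂ * star V₂ * V₂) := by
          rw [a1, h₂]
      _ = V₁ * ((star V₁ * V₁) * (V₂ * star V₂)) * V₂ := by
          rw [← this]; simp only [mul_assoc]
      _ = (V₁ * (star V₁ * V₁)) * (V₂ * star V₂ * V₂) := by simp only [mul_assoc]
      _ = V₁ * V₂ := by rw [a1, h₂]
  tfae_finish
end

section
/- Let V be a partial isometry on a complex Hilbert space H. Then V^n is a partial isometry for every n ≥ 1 (i.e., V is a power partial isometry) if and only if V maps (ker V^{k+1})^⊥ into (ker V^k)^⊥ for every k ≥ 1. -/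
open ContinuousLinearMap

theorem stmt_2 {H : Type*} [NormedAddCommGroup H] [InnerProductSpace ℂ H] [CompleteSpace H]
    (V : H →L[ℂ] H) (hV : IsPartialIsometry V) :
    (∀ n : ℕ, 1 ≤ n → IsPartialIsometry (V ^ n)) ↔
      (∀ k : ℕ, 1 ≤ k → ∀ x ∈ (LinearMap.ker ((V ^ (k + 1) : H →L[ℂ] H) : H →ₗ[ℂ] H))ᗮ,
        V x ∈ (LinearMap.ker ((V ^ k : H →L[ℂ] H) : H →ₗ[ℂ] H))ᗮ) := by
  have hsucc : ∀ (k : ℕ) (x : H), (V ^ (k + 1)) x = (V ^ k) (V x) := by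
    intro k x
    rw [pow_succ]
    rfl
  have hker : ∀ (k : ℕ) (x : H),
      x ∈ (LinearMap.ker ((V ^ (k + 1) : H →L[ℂ] H) : H →ₗ[ℂ] H))ᗮ → ‖V x‖ = ‖x‖ := by
    intro k x hx
    apply hV
    refine Submodule.orthogonal_le ?_ hx
    intro y hy
    have hy' : V y = 0 := hy
    change (V ^ (k + 1)) y = 0
    rw [hsucc, hy', map_zero]
  constructor
  · intro h k hk x hx
    have h1 : ‖(V ^ (k + 1)) x‖ = ‖x‖ := h (k + 1) (by omega) x hx
    have h2 := hker k x hx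
    have hc : IsClosed ((LinearMap.ker ((V ^ k : H →L[ℂ] H) : H →ₗ[ℂ] H) : Submodule ℂ H) : Set H) :=
      ContinuousLinearMap.isClosed_ker (V ^ k)
    have : CompleteSpace (LinearMap.ker ((V ^ k : H →L[ℂ] H) : H →ₗ[ℂ] H)) :=
      hc.completeSpace_coe
    obtain ⟨y, hy, z, hz, hyz⟩ := Submodule.exists_add_mem_mem_orthogonal
      (K := LinearMap.ker ((V ^ k : H →L[ℂ] H) : H →ₗ[ℂ] H)) (V x)
    have hy' : (V ^ k) y = 0 := hy
    have h3 : ‖(V ^ k) z‖ = ‖z‖ := h k hk z hz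
    have h4 : ‖z‖ = ‖x‖ := by
      rw [← h3, ← h1, hsucc, hyz, map_add, hy', zero_add]
    have h5 := norm_add_sq_eq_norm_sq_add_norm_sq_of_inner_eq_zero (𝕜 := ℂ) y z (hz y hy)
    rw [← hyz, h2, h4] at h5
    have h6 : ‖y‖ * ‖y‖ = 0 := by linarith
    have h7 : y = 0 := norm_eq_zero.mp (mul_self_eq_zero.mp h6)
    rw [hyz, h7, zero_add]
    exact hz
  · intro h n hn
    induction n, hn using Nat.le_induction with
    | base => simpa using hV
    | succ k hk ih =>
      intro x hx
      rw [hsucc, ih _ (h k hk x hx)]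
      exact hker k x hx
end

section
/- Let V be a contraction on a complex Hilbert space H such that ker(V²) = ker V. If V^n is a partial isometry for some n ≥ 2, then V is a partial isometry. -/
open ContinuousLinearMap

theorem stmt_3 {H : Type*} [NormedAddCommGroup H] [InnerProductSpace ℂ H] [CompleteSpace H]
    (V : H →L[ℂ] H) (hcontr : ‖V‖ ≤ 1)
    (hker : LinearMap.ker ((V ^ 2 : H →L[ℂ] H) : H →ₗ[ℂ] H) = LinearMap.ker (V : H →ₗ[ℂ] H))
    (n : ℕ) (hn : 2 ≤ n) (hpi : IsPartialIsometry (V ^ n)) :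
    IsPartialIsometry V := by
  have hV : ∀ x, ‖V x‖ ≤ ‖x‖ := fun x => by
    simpa using V.le_of_opNorm_le hcontr x
  have hpow : ∀ (k : ℕ) (x : H), ‖(V ^ k) x‖ ≤ ‖x‖ := by
    intro k
    induction k with
    | zero => intro x; simp
    | succ k ih =>
      intro x
      rw [pow_succ]
      exact (ih (V x)).trans (hV x)
  have hk2 : ∀ x, V (V x) = 0 → V x = 0 := by
    intro x hx
    have h : x ∈ LinearMap.ker ((V ^ 2 : H →L[ℂ] H) : H →ₗ[ℂ] H) := by
      rw [LinearMap.mem_ker, pow_two]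
      exact hx
    rw [hker] at h
    exact h
  have hkn : ∀ (k : ℕ) (x : H), (V ^ (k + 1)) x = 0 → V x = 0 := by
    intro k
    induction k with
    | zero => intro x hx; simpa using hx
    | succ k ih =>
      intro x hx
      rw [pow_succ] at hx
      exact hk2 x (ih (V x) hx)
  obtain ⟨m, rfl⟩ : ∃ m, n = m + 1 := ⟨n - 1, by omega⟩
  intro x hx
  have h1 : ‖(V ^ (m + 1)) x‖ = ‖x‖ := by
    apply hpi
    rw [Submodule.mem_orthogonal] at hx ⊢
    intro u hu
    exact hx u (hkn m u hu)
  apply le_antisymm (hV x)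
  rw [← h1, pow_succ]
  exact hpow m (V x)
end

section
/- Let V be a contraction on a complex Hilbert space H and suppose V^n is a partial isometry for some n ≥ 2. Then V is a partial isometry if and only if both of the following hold: (a) ‖Vh‖ = ‖h‖ for every h ∈ ker(V^n) ∩ (ker V)^⊥; (b) the set V((ker V^n)^⊥) is orthogonal to the set V(ker(V^n) ∩ (ker V)^⊥). -/
open ContinuousLinearMap
open scoped InnerProductSpace

theorem stmt_4 {H : Type*} [NormedAddCommGroup H] [InnerProductSpace ℂ H] [CompleteSpace H]
    (V : H →L[ℂ] H) (hcontr : ‖V‖ ≤ 1)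
    (n : ℕ) (hn : 2 ≤ n) (hpi : IsPartialIsometry (V ^ n)) :
    IsPartialIsometry V ↔
      ((∀ h ∈ LinearMap.ker ((V ^ n : H →L[ℂ] H) : H →ₗ[ℂ] H) ⊓ (LinearMap.ker (V : H →ₗ[ℂ] H))ᗮ, ‖V h‖ = ‖h‖) ∧
       (∀ x ∈ (LinearMap.ker ((V ^ n : H →L[ℂ] H) : H →ₗ[ℂ] H))ᗮ, ∀ y ∈ LinearMap.ker ((V ^ n : H →L[ℂ] H) : H →ₗ[ℂ] H) ⊓ (LinearMap.ker (V : H →ₗ[ℂ] H))ᗮ,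
         ⟪V x, V y⟫_ℂ = 0)) := by
  obtain ⟨m, rfl⟩ : ∃ m, n = m + 1 := ⟨n - 1, by omega⟩
  have hle : LinearMap.ker (V : H →ₗ[ℂ] H) ≤
      LinearMap.ker ((V ^ (m + 1) : H →L[ℂ] H) : H →ₗ[ℂ] H) := by
    intro x hx
    have hx' : V x = 0 := hx
    change (V ^ (m + 1)) x = 0
    rw [pow_succ, ContinuousLinearMap.mul_apply, hx', map_zero]
  have hV : ∀ x, ‖V x‖ ≤ ‖x‖ := fun x => by
    simpa using V.le_of_opNorm_le hcontr x
  have hVm : ∀ k : ℕ, ∀ x, ‖(V ^ k) x‖ ≤ ‖x‖ := by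
    intro k
    induction k with
    | zero => intro x; simp
    | succ k ih =>
      intro x
      rw [pow_succ, ContinuousLinearMap.mul_apply]
      exact (ih _).trans (hV x)
  constructor
  · intro hP
    refine ⟨fun h hh => hP h hh.2, fun x hx y hy => ?_⟩
    have hx' := Submodule.orthogonal_le hle hx
    have hI : ∀ c : ℂ, ‖V x + c • V y‖ = ‖x + c • y‖ := by
      intro c
      rw [← map_smul, ← map_add]
      exact hP _ (Submodule.add_mem _ hx' (Submodule.smul_mem _ c hy.2))
    have hxy : ⟪x, y⟫_ℂ = 0 := Submodule.inner_left_of_mem_orthogonal hy.1 hx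
    rw [← hxy, inner_eq_sum_norm_sq_div_four, inner_eq_sum_norm_sq_div_four]
    have h1 := hI 1
    have h2 := hI (-1)
    have h3 := hI Complex.I
    have h4 := hI (-Complex.I)
    simp only [one_smul, neg_smul, ← sub_eq_add_neg] at h1 h2 h3 h4
    simp only [RCLike.I_to_complex, h1, h2, h3, h4]
  · rintro ⟨ha, hb⟩ x hx
    have hcl : IsClosed (LinearMap.ker ((V ^ (m + 1) : H →L[ℂ] H) : H →ₗ[ℂ] H) : Set H) :=
      ContinuousLinearMap.isClosed_ker (V ^ (m + 1))
    have : CompleteSpace (LinearMap.ker ((V ^ (m + 1) : H →L[ℂ] H) : H →ₗ[ℂ] H)) :=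
      hcl.completeSpace_coe
    obtain ⟨p, hp, q, hq, rfl⟩ :=
      (LinearMap.ker ((V ^ (m + 1) : H →L[ℂ] H) : H →ₗ[ℂ] H)).exists_add_mem_mem_orthogonal x
    have hq' := Submodule.orthogonal_le hle hq
    have hp' : p ∈ (LinearMap.ker (V : H →ₗ[ℂ] H))ᗮ := by
      simpa using Submodule.sub_mem _ hx hq'
    have e1 : ‖V p‖ = ‖p‖ := ha p ⟨hp, hp'⟩
    have e2 : ‖V q‖ = ‖q‖ := by
      apply le_antisymm (hV q)
      rw [← hpi q hq, pow_succ, ContinuousLinearMap.mul_apply]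
      exact hVm m _
    have e3 : ⟪V q, V p⟫_ℂ = 0 := hb q hq p ⟨hp, hp'⟩
    have e4 : ⟪q, p⟫_ℂ = 0 := Submodule.inner_left_of_mem_orthogonal hp hq
    have f1 := norm_add_sq_eq_norm_sq_add_norm_sq_of_inner_eq_zero (V q) (V p) e3
    have f2 := norm_add_sq_eq_norm_sq_add_norm_sq_of_inner_eq_zero q p e4
    rw [e1, e2, ← f2] at f1
    rw [add_comm p q, map_add]
    nlinarith [norm_nonneg (V q + V p), norm_nonneg (q + p)]
end

section
/- Let V₁ and V₂ be partial isometries on a complex Hilbert space H satisfying V₁(V₂V₂*) = (V₂V₂*)V₁. Then the product V₁V₂ is a partial isometry. -/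
open ContinuousLinearMap

theorem pi_to {H : Type*} [NormedAddCommGroup H] [InnerProductSpace ℂ H] [CompleteSpace H]
    (V : H →L[ℂ] H) (h : IsPartialIsometry V) : V * adjoint V * V = V := by
  have hK : IsClosed ((LinearMap.ker (V : H →ₗ[ℂ] H) : Submodule ℂ H) : Set H) :=
    V.isClosed_ker
  haveI : CompleteSpace (LinearMap.ker (V : H →ₗ[ℂ] H)) := hK.completeSpace_coe
  have hdec : ∀ x : H, ∃ b ∈ (LinearMap.ker (V : H →ₗ[ℂ] H))ᗮ, V x = V b ∧ ‖b‖ ≤ ‖x‖ := by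
    intro x
    refine ⟨(LinearMap.ker (V : H →ₗ[ℂ] H))ᗮ.starProjection x,
      Submodule.starProjection_apply_mem _ x, ?_, Submodule.norm_starProjection_apply_le _ x⟩
    have h1 := Submodule.sub_starProjection_mem_orthogonal
      (K := (LinearMap.ker (V : H →ₗ[ℂ] H))ᗮ) x
    rw [Submodule.orthogonal_orthogonal] at h1
    have h2 : V (x - (LinearMap.ker (V : H →ₗ[ℂ] H))ᗮ.starProjection x) = 0 := h1
    rwa [map_sub, sub_eq_zero] at h2
  have hn : ‖V‖ ≤ 1 := by
    refine V.opNorm_le_bound zero_le_one fun x => ?_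
    obtain ⟨b, hb, e, l⟩ := hdec x
    rw [e, h b hb, one_mul]
    exact l
  have hfix : ∀ b ∈ (LinearMap.ker (V : H →ₗ[ℂ] H))ᗮ, adjoint V (V b) = b := by
    intro b hb
    have h1 : ‖adjoint V (V b)‖ ≤ ‖V b‖ := by
      have := (adjoint V).le_opNorm (V b)
      rw [LinearIsometryEquiv.norm_map] at this
      nlinarith [norm_nonneg (V b)]
    have h2 := @norm_sub_sq ℂ H _ _ _ (adjoint V (V b)) b
    rw [adjoint_inner_left, inner_self_eq_norm_sq, h b hb] at h2
    rw [h b hb] at h1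
    have h3 : ‖adjoint V (V b) - b‖ ^ 2 ≤ 0 := by
      nlinarith [norm_nonneg (adjoint V (V b)), norm_nonneg b]
    have h4 : ‖adjoint V (V b) - b‖ = 0 := by
      nlinarith [norm_nonneg (adjoint V (V b) - b)]
    exact sub_eq_zero.mp (norm_eq_zero.mp h4)
  ext x
  obtain ⟨b, hb, e, -⟩ := hdec x
  change V (adjoint V (V x)) = V x
  rw [e, hfix b hb]

theorem pi_of {H : Type*} [NormedAddCommGroup H] [InnerProductSpace ℂ H] [CompleteSpace H]
    (V : H →L[ℂ] H) (h : V * adjoint V * V = V) : IsPartialIsometry V := by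
  intro x hx
  have hk : V (adjoint V (V x) - x) = 0 := by
    rw [map_sub, sub_eq_zero]
    exact congrArg (fun T : H →L[ℂ] H => T x) h
  have ho : adjoint V (V x) - x ∈ (LinearMap.ker (V : H →ₗ[ℂ] H))ᗮ := by
    refine Submodule.sub_mem _ ?_ hx
    rw [Submodule.mem_orthogonal]
    intro u hu
    have hu' : V u = 0 := hu
    rw [adjoint_inner_right, hu', inner_zero_left]
  have h0 : adjoint V (V x) - x = 0 :=
    inner_self_eq_zero.mp ((Submodule.mem_orthogonal _ _).mp ho _ hk)
  have h1 : inner ℂ (V x) (V x) = inner ℂ x x := by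
    rw [← adjoint_inner_left, sub_eq_zero.mp h0]
  rw [inner_self_eq_norm_sq_to_K, inner_self_eq_norm_sq_to_K] at h1
  have h2 : ‖V x‖ ^ 2 = ‖x‖ ^ 2 := by exact_mod_cast h1
  exact (sq_eq_sq₀ (norm_nonneg _) (norm_nonneg _)).mp h2

theorem stmt_5 {H : Type*} [NormedAddCommGroup H] [InnerProductSpace ℂ H] [CompleteSpace H]
    (V₁ V₂ : H →L[ℂ] H) (h₁ : IsPartialIsometry V₁) (h₂ : IsPartialIsometry V₂)
    (hcomm : V₁ * (V₂ * adjoint V₂) = (V₂ * adjoint V₂) * V₁) :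
    IsPartialIsometry (V₁ * V₂) := by
  apply pi_of
  have e1 := pi_to V₁ h₁
  have e2 := pi_to V₂ h₂
  simp only [← star_eq_adjoint] at *
  have hc : star V₁ * (V₂ * star V₂) = (V₂ * star V₂) * star V₁ := by
    have := congrArg star hcomm
    simp only [star_mul, star_star] at this
    exact this.symm
  rw [star_mul]
  calc V₁ * V₂ * (star V₂ * star V₁) * (V₁ * V₂)
      = V₁ * ((V₂ * star V₂) * star V₁) * V₁ * V₂ := by simp only [mul_assoc]
    _ = V₁ * star V₁ * ((V₂ * star V₂) * V₁) * V₂ := by rw [← hc]; simp only [mul_assoc]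
    _ = (V₁ * star V₁ * V₁) * (V₂ * star V₂ * V₂) := by rw [← hcomm]; simp only [mul_assoc]
    _ = V₁ * V₂ := by rw [e1, e2]
end

section
/- Let V₁ and V₂ be partial isometries on a complex Hilbert space H. Then the product V₁V₂ is a partial isometry if and only if the projections E = V₁*V₁ and F = V₂V₂* commute. -/
open ContinuousLinearMap

theorem proj_comm_aux {R : Type*} [NonUnitalNormedRing R] [StarRing R] [CStarRing R]
    (E F : R) (hE : star E = E) (hF : star F = F) (hEE : E * E = E) (hFF : F * F = F)
    (h : E * F * E * F = E * F) : E * F = F * E := by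
  have h2 : E * (F * (E * F)) = E * F := by simpa only [mul_assoc] using h
  have hEE' : ∀ x, E * (E * x) = E * x := fun x => by rw [← mul_assoc, hEE]
  have hFF' : ∀ x, F * (F * x) = F * x := fun x => by rw [← mul_assoc, hFF]
  have hY : star (E * F - F * (E * F)) * (E * F - F * (E * F)) = 0 := by
    simp only [star_sub, star_mul, hE, hF, sub_mul, mul_sub, mul_assoc, hEE', hFF', h2]
    simp
  have hY' := sub_eq_zero.mp ((CStarRing.star_mul_self_eq_zero_iff _).mp hY)
  have h3 := congrArg star hY'
  simp only [star_mul, hE, hF, mul_assoc] at h3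
  rw [hY', h3]

theorem stmt_6 {H : Type*} [NormedAddCommGroup H] [InnerProductSpace ℂ H] [CompleteSpace H]
    (V₁ V₂ : H →L[ℂ] H) (h₁ : IsPartialIsometry V₁) (h₂ : IsPartialIsometry V₂) :
    IsPartialIsometry (V₁ * V₂) ↔ Commute (adjoint V₁ * V₁) (V₂ * adjoint V₂) := by
  rw [isPartialIsometry_iff_aux] at h₁ h₂ ⊢
  rw [← star_eq_adjoint, ← star_eq_adjoint, star_mul]
  constructor
  · intro h
    refine proj_comm_aux (star V₁ * V₁) (V₂ * star V₂) (by rw [star_mul, star_star])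
      (by rw [star_mul, star_star]) ?_ ?_ ?_
    · rw [mul_assoc, ← mul_assoc V₁, h₁]
    · rw [← mul_assoc, h₂]
    · have := congrArg (fun T => star V₁ * T * star V₂) h
      simpa only [mul_assoc] using this
  · intro h
    calc V₁ * V₂ * (star V₂ * star V₁) * (V₁ * V₂)
        = V₁ * ((V₂ * star V₂) * (star V₁ * V₁)) * V₂ := by simp only [mul_assoc]
      _ = V₁ * ((star V₁ * V₁) * (V₂ * star V₂)) * V₂ := by rw [h.eq]
      _ = (V₁ * star V₁ * V₁) * (V₂ * star V₂ * V₂) := by simp only [mul_assoc]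
      _ = V₁ * V₂ := by rw [h₁, h₂]
end

section
/- Let n ≥ 2 and let V₁, …, Vₙ be partial isometries on a complex Hilbert space H. For i ∈ {1,…,n} set Tᵢ = V₁V₂⋯Vᵢ. Then the following are equivalent: (1) Tᵢ is a partial isometry for every i ∈ {2,…,n}; (2) for every i ∈ {2,…,n}, VᵢVᵢ* maps the range of T_{i-1}* into the range of T_{i-1}*; (3) for every i ∈ {1,…,n-1}, Tᵢ*Tᵢ maps the range of V_{i+1} into the range of V_{i+1}. -/
open ContinuousLinearMap

section aux
variable {H : Type*} [NormedAddCommGroup H] [InnerProductSpace ℂ H] [CompleteSpace H]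

lemma adj_mem_ker_perp (V : H →L[ℂ] H) (y : H) :
    adjoint V y ∈ (LinearMap.ker (V : H →ₗ[ℂ] H))ᗮ := by
  rw [Submodule.mem_orthogonal]
  intro u hu
  have hu' : V u = 0 := hu
  rw [adjoint_inner_right, hu', inner_zero_left]

lemma pi_iff (V : H →L[ℂ] H) : IsPartialIsometry V ↔ V * star V * V = V := by
  rw [star_eq_adjoint]
  constructor
  · intro h
    have key : ∀ x ∈ (LinearMap.ker (V : H →ₗ[ℂ] H))ᗮ, adjoint V (V x) = x := by
      intro x hx
      have h1 := h x hx
      have h2 := h _ (adj_mem_ker_perp V (V x))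
      set a := adjoint V (V x) with ha
      have h3 : ‖a‖ * ‖a‖ ≤ ‖a‖ * ‖x‖ := by
        have e : inner ℂ a a = inner ℂ (V a) (V x) := by
          conv_lhs => rw [ha]
          rw [adjoint_inner_right]
        calc ‖a‖ * ‖a‖ = ‖inner ℂ a a‖ := by
              rw [inner_self_eq_norm_sq_to_K]; simp [sq]
          _ ≤ ‖V a‖ * ‖V x‖ := by rw [e]; exact norm_inner_le_norm _ _
          _ = _ := by rw [h1, h2]
      have h4 : ‖a‖ ≤ ‖x‖ := by
        by_contra hc
        push Not at hc
        nlinarith [norm_nonneg x, norm_nonneg a]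
      have h5 : RCLike.re (inner ℂ a x) = ‖x‖ ^ 2 := by
        rw [ha, adjoint_inner_left, inner_self_eq_norm_sq, h1]
      have h6 := @norm_sub_sq ℂ _ _ _ _ a x
      rw [h5] at h6
      have h7 : ‖a - x‖ ^ 2 ≤ 0 := by nlinarith [norm_nonneg x, norm_nonneg a]
      have h8 : ‖a - x‖ = 0 := by nlinarith [norm_nonneg (a - x)]
      exact sub_eq_zero.1 (norm_eq_zero.1 h8)
    have : CompleteSpace (LinearMap.ker (V : H →ₗ[ℂ] H)) :=
      (V.isClosed_ker).completeSpace_coe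
    ext y
    obtain ⟨k, hk, p, hp, rfl⟩ :=
      Submodule.exists_add_mem_mem_orthogonal (K := LinearMap.ker (V : H →ₗ[ℂ] H)) y
    have hk' : V k = 0 := hk
    simp only [mul_apply_eq_comp, map_add, hk', key p hp, map_zero]
  · intro h x hx
    have e : V (adjoint V (V x)) = V x := by
      conv_rhs => rw [← h]
      rfl
    have h1 : adjoint V (V x) - x ∈ LinearMap.ker (V : H →ₗ[ℂ] H) := by
      simp [e]
    have h2 := Submodule.sub_mem _ (adj_mem_ker_perp V (V x)) hx
    have h3 : inner ℂ (adjoint V (V x) - x) (adjoint V (V x) - x) = 0 :=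
      (Submodule.mem_orthogonal _ _).1 h2 _ h1
    have h4 : adjoint V (V x) = x := sub_eq_zero.1 (inner_self_eq_zero.1 h3)
    have h5 : ‖V x‖ ^ 2 = ‖x‖ ^ 2 := by
      rw [← @inner_self_eq_norm_sq ℂ, ← adjoint_inner_left, h4, inner_self_eq_norm_sq]
    exact (sq_eq_sq₀ (norm_nonneg _) (norm_nonneg _)).1 h5

/-- For partial isometries, the product is one iff the projections commute. -/
lemma prod_iff {T V : H →L[ℂ] H} (hT : T * star T * T = T) (hV : V * star V * V = V) :
    T * V * star (T * V) * (T * V) = T * V ↔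
      (star T * T) * (V * star V) = (V * star V) * (star T * T) := by
  have hP : (star T * T) * (star T * T) = star T * T := by
    calc _ = star T * (T * star T * T) := by noncomm_ring
      _ = _ := by rw [hT]
  have hQ : (V * star V) * (V * star V) = V * star V := by
    calc _ = (V * star V * V) * star V := by noncomm_ring
      _ = _ := by rw [hV]
  constructor
  · intro h
    have sP : star (star T * T) = star T * T := by simp
    have sQ : star (V * star V) = V * star V := by simp
    have h1 : (star T * T) * (V * star V) * (star T * T) * (V * star V)
        = (star T * T) * (V * star V) := by
      calc _ = star T * (T * V * star (T * V) * (T * V)) * star V := by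
            rw [star_mul]; noncomm_ring
        _ = _ := by rw [h]; noncomm_ring
    generalize star T * T = P at *
    generalize V * star V = Q at *
    have h2 : Q * P * Q * P * Q = Q * P * Q := by
      calc _ = Q * (P * Q * P * Q) := by noncomm_ring
        _ = _ := by rw [h1]; noncomm_ring
    have h0 : star (P * Q - Q * P * Q) * (P * Q - Q * P * Q) = 0 := by
      simp only [star_sub, star_mul, sP, sQ]
      calc _ = Q * (P * P) * Q - Q * P * Q * P * Q - Q * P * Q * P * Q
            + Q * P * (Q * Q) * P * Q := by noncomm_ring
        _ = 0 := by rw [hP, hQ, h2]; noncomm_ring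
    have h3 : P * Q = Q * P * Q := sub_eq_zero.1 ((CStarRing.star_mul_self_eq_zero_iff _).1 h0)
    have h4 := congrArg star h3
    simp only [star_mul, sP, sQ] at h4
    exact h3.trans ((mul_assoc _ _ _).trans h4.symm)
  · intro h
    calc _ = T * ((V * star V) * (star T * T)) * V := by rw [star_mul]; noncomm_ring
      _ = (T * star T * T) * (V * star V * V) := by rw [← h]; noncomm_ring
      _ = _ := by rw [hT, hV]

/-- invariance of a projection's range, `P = A B` with `A B A = A` -/
lemma inv_iff {A P Q : H →L[ℂ] H} (B : H →L[ℂ] H) (hPAB : P = A * B) (hA : A * B * A = A)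
    (sP : star P = P) (sQ : star Q = Q) :
    (∀ x ∈ LinearMap.range (A : H →ₗ[ℂ] H), Q x ∈ LinearMap.range (A : H →ₗ[ℂ] H)) ↔
      P * Q = Q * P := by
  have hPA : P * A = A := by rw [hPAB, hA]
  constructor
  · intro h
    have h1 : P * Q * P = Q * P := by
      ext x
      obtain ⟨z, hz⟩ := h (P x) ⟨B x, by rw [hPAB]; rfl⟩
      have hz' : A z = Q (P x) := hz
      change P (Q (P x)) = Q (P x)
      rw [← hz']
      exact congrArg (fun F : H →L[ℂ] H => F z) hPA
    have h2 := congrArg star h1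
    simp only [star_mul, sP, sQ] at h2
    exact h2.symm.trans ((mul_assoc _ _ _).symm.trans h1)
  · rintro h _ ⟨y, rfl⟩
    refine ⟨B (Q (A y)), ?_⟩
    have : A * B * Q * A = Q * A := by
      rw [← hPAB, h, mul_assoc, hPA]
    exact congrArg (fun F : H →L[ℂ] H => F y) this

lemma two_iff {T V : H →L[ℂ] H} (hT : T * star T * T = T) :
    (∀ x ∈ LinearMap.range (adjoint T : H →ₗ[ℂ] H),
         (V * adjoint V) x ∈ LinearMap.range (adjoint T : H →ₗ[ℂ] H)) ↔
      (star T * T) * (V * star V) = (V * star V) * (star T * T) := by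
  rw [← star_eq_adjoint, ← star_eq_adjoint]
  refine inv_iff T rfl ?_ (by simp) (by simp)
  have := congrArg star hT
  simpa [mul_assoc] using this

lemma three_iff {T V : H →L[ℂ] H} (hV : V * star V * V = V) :
    (∀ x ∈ LinearMap.range (V : H →ₗ[ℂ] H),
         (adjoint T * T) x ∈ LinearMap.range (V : H →ₗ[ℂ] H)) ↔
      (star T * T) * (V * star V) = (V * star V) * (star T * T) := by
  rw [← star_eq_adjoint, eq_comm (a := star T * T * _)]
  exact inv_iff (star V) rfl hV (by simp) (by simp)

end aux

theorem stmt_7 {H : Type*} [NormedAddCommGroup H] [InnerProductSpace ℂ H] [CompleteSpace H]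
    (n : ℕ) (hn : 2 ≤ n) (V : ℕ → H →L[ℂ] H)
    (hV : ∀ i ∈ Finset.Icc 1 n, IsPartialIsometry (V i))
    (T : ℕ → H →L[ℂ] H)
    (hT : ∀ i, T i = (((List.range i).map (fun j => V (j + 1)))).prod) :
    List.TFAE
      [∀ i ∈ Finset.Icc 2 n, IsPartialIsometry (T i),
       ∀ i ∈ Finset.Icc 2 n, ∀ x ∈ LinearMap.range (adjoint (T (i - 1)) : H →ₗ[ℂ] H),
         (V i * adjoint (V i)) x ∈ LinearMap.range (adjoint (T (i - 1)) : H →ₗ[ℂ] H),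
       ∀ i ∈ Finset.Icc 1 (n - 1), ∀ x ∈ LinearMap.range (V (i + 1) : H →ₗ[ℂ] H),
         (adjoint (T i) * T i) x ∈ LinearMap.range (V (i + 1) : H →ₗ[ℂ] H)] := by
  have hsucc : ∀ i, T (i + 1) = T i * V (i + 1) := by
    intro i
    rw [hT, hT, List.range_succ]; simp
  have hT1 : T 1 = V 1 := by rw [hT]; simp
  have hV' : ∀ i, 1 ≤ i → i ≤ n → V i * star (V i) * V i = V i := fun i h1 h2 =>
    (pi_iff _).1 (hV i (Finset.mem_Icc.2 ⟨h1, h2⟩))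
  have hP1 : T 1 * star (T 1) * T 1 = T 1 := by
    rw [hT1]; exact hV' 1 le_rfl (by omega)
  -- generic induction
  have ind : ∀ C : ℕ → Prop, (∀ i, 1 ≤ i → i + 1 ≤ n → T i * star (T i) * T i = T i → C i →
      T (i + 1) * star (T (i + 1)) * T (i + 1) = T (i + 1)) → (∀ i, 1 ≤ i → i + 1 ≤ n → C i) →
      ∀ i, 1 ≤ i → i ≤ n → T i * star (T i) * T i = T i := by
    intro C h1 h2 i hi
    induction i, hi using Nat.le_induction with
    | base => intro _; exact hP1
    | succ i hi ih => intro hin; exact h1 i hi hin (ih (by omega)) (h2 i hi hin)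
  have step : ∀ i, 1 ≤ i → i + 1 ≤ n → T i * star (T i) * T i = T i →
      (T (i + 1) * star (T (i + 1)) * T (i + 1) = T (i + 1) ↔
      (star (T i) * T i) * (V (i + 1) * star (V (i + 1)))
        = (V (i + 1) * star (V (i + 1))) * (star (T i) * T i)) := by
    intro i hi hin h
    rw [hsucc]
    exact prod_iff h (hV' _ (by omega) hin)
  have all : (∀ i ∈ Finset.Icc 2 n, IsPartialIsometry (T i)) →
      ∀ i, 1 ≤ i → i ≤ n → T i * star (T i) * T i = T i := by
    intro h i hi hin
    rcases Nat.eq_or_lt_of_le hi with rfl | h2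
    · exact hP1
    · exact (pi_iff _).1 (h i (Finset.mem_Icc.2 ⟨h2, hin⟩))
  tfae_have 1 → 2 := by
    intro h i hi
    obtain ⟨h2, hin⟩ := Finset.mem_Icc.1 hi
    obtain ⟨j, rfl⟩ : ∃ j, i = j + 1 := ⟨i - 1, by omega⟩
    rw [Nat.add_sub_cancel]
    have hj := all h j (by omega) (by omega)
    exact (two_iff hj).2 ((step j (by omega) hin hj).1 (all h _ (by omega) hin))
  tfae_have 1 → 3 := by
    intro h j hj
    obtain ⟨h1, hin⟩ := Finset.mem_Icc.1 hj
    have hj := all h j (by omega) (by omega)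
    exact (three_iff (hV' _ (by omega) (by omega))).2
      ((step j (by omega) (by omega) hj).1 (all h _ (by omega) (by omega)))
  tfae_have 2 → 1 := by
    intro h i hi
    obtain ⟨h2, hin⟩ := Finset.mem_Icc.1 hi
    refine (pi_iff _).2 (ind _ (fun j h1 hjn hj hC => (step j h1 hjn hj).2 ((two_iff hj).1 hC))
      (fun j h1 hjn => ?_) i (by omega) hin)
    exact h (j + 1) (Finset.mem_Icc.2 ⟨by omega, hjn⟩)
  tfae_have 3 → 1 := by
    intro h i hi
    obtain ⟨h2, hin⟩ := Finset.mem_Icc.1 hi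
    refine (pi_iff _).2 (ind _ (fun j h1 hjn hj hC => (step j h1 hjn hj).2
      ((three_iff (hV' _ (by omega) hjn)).1 hC))
      (fun j h1 hjn => ?_) i (by omega) hin)
    exact h j (Finset.mem_Icc.2 ⟨by omega, by omega⟩)
  tfae_finish
end

section
/- Let V be a contraction on a complex Hilbert space H. Then the operator on H ⊕ H given by the block matrix [[V, (I − VV*)^{1/2}], [0, 0]], i.e., (x, y) ↦ (Vx + (I − VV*)^{1/2} y, 0), is a partial isometry. -/
open ContinuousLinearMap

theorem stmt_8 {H : Type*} [NormedAddCommGroup H] [InnerProductSpace ℂ H] [CompleteSpace H]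
    (V : H →L[ℂ] H) (hcontr : ‖V‖ ≤ 1)
    (M : WithLp 2 (H × H) →L[ℂ] WithLp 2 (H × H))
    (hM : ∀ x y : H,
      M ((WithLp.equiv 2 (H × H)).symm (x, y)) =
        (WithLp.equiv 2 (H × H)).symm (V x + CFC.sqrt (1 - V * adjoint V) y, 0)) :
    IsPartialIsometry M := by
  have hpos : (0 : H →L[ℂ] H) ≤ 1 - V * adjoint V := by
    rw [sub_nonneg]
    refine ContinuousLinearMap.le_def _ _ |>.2 ?_
    rw [ContinuousLinearMap.isPositive_def']
    refine ⟨?_, fun x => ?_⟩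
    · exact (IsSelfAdjoint.one _).sub (IsSelfAdjoint.mul_star_self V)
    · have h1 : ‖adjoint V x‖ ≤ ‖x‖ := by
        calc _ ≤ ‖adjoint V‖ * ‖x‖ := le_opNorm _ _
          _ ≤ 1 * ‖x‖ := by
            gcongr
            rw [LinearIsometryEquiv.norm_map]; exact hcontr
          _ = _ := one_mul _
      rw [ContinuousLinearMap.reApplyInnerSelf_apply]
      have h2 : inner ℂ ((1 - V * adjoint V) x) x = inner ℂ x x - inner ℂ (adjoint V x) (adjoint V x) := by
        rw [ContinuousLinearMap.adjoint_inner_right]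
        simp [inner_sub_left]
      rw [h2, map_sub, inner_self_eq_norm_sq, inner_self_eq_norm_sq]
      nlinarith [norm_nonneg (adjoint V x)]
  have hDD := CFC.sqrt_mul_sqrt_self (1 - V * adjoint V) hpos
  have hDs : adjoint (CFC.sqrt (1 - V * adjoint V)) = CFC.sqrt (1 - V * adjoint V) :=
    (IsSelfAdjoint.of_nonneg (CFC.sqrt_nonneg (1 - V * adjoint V))).star_eq
  generalize CFC.sqrt (1 - V * adjoint V) = D at *
  have hM' : ∀ z, M z = WithLp.toLp 2 (V z.fst + D z.snd, 0) := fun z => hM z.fst z.snd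
  intro z hz
  rw [Submodule.mem_orthogonal] at hz
  set w := V z.fst + D z.snd with hw
  have key : ∀ u : WithLp 2 (H × H),
      inner ℂ u (WithLp.toLp 2 (adjoint V w, D w)) = inner ℂ (V u.fst + D u.snd) w := by
    intro u
    have : inner ℂ u.snd (D w) = inner ℂ (D u.snd) w := by
      conv_lhs => rw [← hDs]
      rw [ContinuousLinearMap.adjoint_inner_right]
    rw [WithLp.prod_inner_apply, inner_add_left, ← this]
    simp [ContinuousLinearMap.adjoint_inner_right]
  have hw2 : V (adjoint V w) + D (D w) = w := by
    have := congrArg (fun T : H →L[ℂ] H => T w) hDD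
    simp at this
    rw [this]; abel
  set z' : WithLp 2 (H × H) := WithLp.toLp 2 (adjoint V w, D w) with hz'
  have hker : M (z - z') = 0 := by
    rw [map_sub, hM', hM', ← hw]
    simp [hz', hw2]
  have h1 := hz (z - z') hker
  have h2 := key (z - z')
  have h3 : V (z - z').fst + D (z - z').snd = 0 := by
    have : V (z - z').fst + D (z - z').snd = w - (V (adjoint V w) + D (D w)) := by
      simp [hz', hw]; abel
    rw [this, hw2, sub_self]
  rw [h3, inner_zero_left] at h2
  have hzz : z = z' := by
    rw [← sub_eq_zero, ← inner_self_eq_zero (𝕜 := ℂ), inner_sub_right, h1, h2, sub_zero]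
  have h4 := key z
  rw [← hw, ← hzz] at h4
  have h5 : ‖M z‖ = ‖w‖ := by
    rw [hM', ← hw]; simp
  rw [h5]
  rw [inner_self_eq_norm_sq_to_K, inner_self_eq_norm_sq_to_K] at h4
  have h6 : ‖z‖ ^ 2 = ‖w‖ ^ 2 := by exact_mod_cast h4
  exact ((sq_eq_sq₀ (norm_nonneg _) (norm_nonneg _)).1 h6).symm
end

section
/- Let V₁ and V₂ be contractions on a complex Hilbert space H. Then the operator M on H ⊕ H given by the block matrix [[V₁V₂, V₁(I − V₂V₂*)^{1/2}], [0, 0]], i.e., (x, y) ↦ (V₁V₂ x + V₁(I − V₂V₂*)^{1/2} y, 0), is a partial isometry if and only if V₁ is a partial isometry. -/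
open ContinuousLinearMap

theorem stmt_9 {H : Type*} [NormedAddCommGroup H] [InnerProductSpace ℂ H] [CompleteSpace H]
    (V₁ V₂ : H →L[ℂ] H) (hcontr₁ : ‖V₁‖ ≤ 1) (hcontr₂ : ‖V₂‖ ≤ 1)
    (M : WithLp 2 (H × H) →L[ℂ] WithLp 2 (H × H))
    (hM : ∀ x y : H,
      M ((WithLp.equiv 2 (H × H)).symm (x, y)) =
        (WithLp.equiv 2 (H × H)).symm
          (V₁ (V₂ x) + V₁ (CFC.sqrt (1 - V₂ * adjoint V₂) y), 0)) :
    IsPartialIsometry M ↔ IsPartialIsometry V₁ := by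
  have hpos : (0 : H →L[ℂ] H) ≤ 1 - V₂ * adjoint V₂ := by
    rw [sub_nonneg]
    have h1 : ‖V₂ * adjoint V₂‖ ≤ 1 := by
      refine (norm_mul_le _ _).trans ?_
      have : ‖adjoint V₂‖ = ‖V₂‖ := LinearIsometryEquiv.norm_map _ _
      rw [this]
      nlinarith [norm_nonneg V₂]
    have h0 : (0 : H →L[ℂ] H) ≤ V₂ * adjoint V₂ := mul_star_self_nonneg V₂
    exact (CStarAlgebra.norm_le_one_iff_of_nonneg _ h0).1 h1
  generalize hS : CFC.sqrt (1 - V₂ * adjoint V₂) = S at hM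
  have hSS : S * S = 1 - V₂ * adjoint V₂ := by
    rw [← hS]; exact CFC.sqrt_mul_sqrt_self _ hpos
  have hSsa : adjoint S = S := by
    have : (0 : H →L[ℂ] H) ≤ S := by rw [← hS]; exact CFC.sqrt_nonneg _
    exact (IsSelfAdjoint.of_nonneg this).star_eq
  let R : WithLp 2 (H × H) → H := fun p => V₂ p.fst + S p.snd
  let W : H → WithLp 2 (H × H) := fun h => WithLp.toLp 2 (adjoint V₂ h, S h)
  have hMn : ∀ p, M p = WithLp.toLp 2 (V₁ (R p), 0) := by
    intro p
    have := hM p.fst p.snd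
    rw [← map_add] at this
    exact this
  have hRW : ∀ h, R (W h) = h := by
    intro h
    have := congrArg (fun T : H →L[ℂ] H => T h) hSS
    simp at this
    simp [R, W, this]
  have hadj : ∀ p h, inner ℂ p (W h) = inner ℂ (R p) h := by
    intro p h
    simp only [R, W, WithLp.prod_inner_apply, inner_add_left]
    rw [adjoint_inner_right]
    congr 1
    nth_rewrite 1 [← hSsa]
    rw [adjoint_inner_right]
    rfl
  have hWn : ∀ h, ‖W h‖ = ‖h‖ := by
    intro h
    have := hadj (W h) h
    rw [hRW, inner_self_eq_norm_sq_to_K, inner_self_eq_norm_sq_to_K] at this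
    have h2 : ‖W h‖ ^ 2 = ‖h‖ ^ 2 := by exact_mod_cast this
    exact (sq_eq_sq₀ (norm_nonneg _) (norm_nonneg _)).1 h2
  have hker : ∀ p, p ∈ LinearMap.ker (M : WithLp 2 (H × H) →ₗ[ℂ] WithLp 2 (H × H)) ↔
      V₁ (R p) = 0 := by
    intro p
    rw [LinearMap.mem_ker]
    change M p = 0 ↔ _
    rw [hMn]
    constructor
    · intro h
      exact congrArg WithLp.fst h
    · intro h
      rw [h]; rfl
  have hnorm : ∀ p, ‖M p‖ = ‖V₁ (R p)‖ := by
    intro p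
    rw [hMn]
    simp
  have hW : ∀ h ∈ (LinearMap.ker (V₁ : H →ₗ[ℂ] H))ᗮ,
      W h ∈ (LinearMap.ker (M : WithLp 2 (H × H) →ₗ[ℂ] WithLp 2 (H × H)))ᗮ := by
    intro h hh
    rw [Submodule.mem_orthogonal] at hh ⊢
    intro p hp
    rw [hadj]
    exact hh _ ((hker p).1 hp)
  have hR : ∀ p ∈ (LinearMap.ker (M : WithLp 2 (H × H) →ₗ[ℂ] WithLp 2 (H × H)))ᗮ,
      R p ∈ (LinearMap.ker (V₁ : H →ₗ[ℂ] H))ᗮ := by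
    intro p hp
    rw [Submodule.mem_orthogonal'] at hp ⊢
    intro k hk
    rw [← hadj]
    apply hp
    rw [hker, hRW]
    exact hk
  constructor
  · intro hMi h hh
    have := hMi _ (hW h hh)
    rw [hWn] at this
    rw [← this]
    change ‖V₁ h‖ = ‖M (W h)‖
    rw [hnorm, hRW]
  · intro hV p hp
    have h1 := hR p hp
    have h2 := hW _ h1
    have h3 := Submodule.sub_mem _ hp h2
    have h4 : p - W (R p) ∈ LinearMap.ker (M : WithLp 2 (H × H) →ₗ[ℂ] WithLp 2 (H × H)) := by
      rw [LinearMap.mem_ker, map_sub, sub_eq_zero]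
      change M p = M (W (R p))
      rw [hMn, hMn, hRW]
    have h5 : p - W (R p) = 0 := by
      have := (Submodule.mem_orthogonal _ _).1 h3 _ h4
      exact inner_self_eq_zero.1 this
    have h6 := hV _ h1
    change ‖M p‖ = ‖p‖
    rw [hnorm]
    refine h6.trans ?_
    rw [← hWn, ← sub_eq_zero.1 h5]
end

section
/- Let V be a partial isometry on a complex Hilbert space H and let n ≥ 1. Then V maps (ker V^n)^⊥ into (ker V^{n-1})^⊥ if and only if VV* maps ker(V^{n-1}) into ker(V^{n-1}). -/
open ContinuousLinearMap

theorem stmt_10 {H : Type*} [NormedAddCommGroup H] [InnerProductSpace ℂ H] [CompleteSpace H]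
    (V : H →L[ℂ] H) (hV : IsPartialIsometry V) (n : ℕ) (hn : 1 ≤ n) :
    (∀ x ∈ (LinearMap.ker ((V ^ n : H →L[ℂ] H) : H →ₗ[ℂ] H))ᗮ, V x ∈ (LinearMap.ker ((V ^ (n - 1) : H →L[ℂ] H) : H →ₗ[ℂ] H))ᗮ) ↔
      (∀ x ∈ LinearMap.ker ((V ^ (n - 1) : H →L[ℂ] H) : H →ₗ[ℂ] H),
        (V * adjoint V) x ∈ LinearMap.ker ((V ^ (n - 1) : H →L[ℂ] H) : H →ₗ[ℂ] H)) := by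
  obtain ⟨m, rfl⟩ : ∃ m, n = m + 1 := ⟨n - 1, by omega⟩
  simp only [Nat.add_sub_cancel]
  have key : ∀ y : H, (V ^ (m + 1)) y = (V ^ m) (V y) := by
    intro y
    rw [pow_succ]
    rfl
  constructor
  · intro h x hx
    have hmem : adjoint V x ∈ LinearMap.ker ((V ^ (m + 1) : H →L[ℂ] H) : H →ₗ[ℂ] H) := by
      have hc : IsClosed ((LinearMap.ker ((V ^ (m + 1) : H →L[ℂ] H) : H →ₗ[ℂ] H) :
          Submodule ℂ H) : Set H) := (V ^ (m + 1)).isClosed_ker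
      haveI : CompleteSpace (LinearMap.ker ((V ^ (m + 1) : H →L[ℂ] H) : H →ₗ[ℂ] H)) :=
        hc.completeSpace_coe
      rw [← Submodule.orthogonal_orthogonal
        (LinearMap.ker ((V ^ (m + 1) : H →L[ℂ] H) : H →ₗ[ℂ] H)), Submodule.mem_orthogonal]
      intro u hu
      rw [adjoint_inner_right]
      exact Submodule.inner_left_of_mem_orthogonal hx (h u hu)
    have h2 : (V ^ (m + 1)) (adjoint V x) = 0 := hmem
    rw [key] at h2
    exact h2
  · intro h x hx
    rw [Submodule.mem_orthogonal]
    intro u hu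
    rw [← adjoint_inner_left]
    refine Submodule.inner_right_of_mem_orthogonal ?_ hx
    have h2 : (V ^ m) (V (adjoint V u)) = 0 := h u hu
    rw [← key] at h2
    exact h2
end

section
/- Let V be a bounded linear operator on a complex Hilbert space H with closed range such that ker V ⊆ ⋂_{n ≥ 0} range(V^n), and let S be a bounded linear operator on H that is a generalized inverse of V, i.e., SVS = S and VSV = V. Then S maps ker(V^m) into ker(V^{m+1}) for every m ≥ 1. -/
open ContinuousLinearMap

theorem stmt_12 {H : Type*} [NormedAddCommGroup H] [InnerProductSpace ℂ H] [CompleteSpace H]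
    (V : H →L[ℂ] H) (hclosed : IsClosed (LinearMap.range (V : H →ₗ[ℂ] H) : Set H))
    (hreg : LinearMap.ker (V : H →ₗ[ℂ] H) ≤ ⨅ n : ℕ, LinearMap.range ((V ^ n : H →L[ℂ] H) : H →ₗ[ℂ] H))
    (S : H →L[ℂ] H) (hS₁ : S * V * S = S) (hS₂ : V * S * V = V) :
    ∀ m : ℕ, 1 ≤ m → ∀ x ∈ LinearMap.ker ((V ^ m : H →L[ℂ] H) : H →ₗ[ℂ] H), S x ∈ LinearMap.ker ((V ^ (m + 1) : H →L[ℂ] H) : H →ₗ[ℂ] H) := by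
  have key : ∀ m : ℕ, ∀ x : H, (V ^ m) x = 0 → ∃ y, V y = x := by
    intro m
    induction m with
    | zero =>
      intro x hx
      have hx0 : x = 0 := by simpa using hx
      exact ⟨0, by simp [hx0]⟩
    | succ k ih =>
      intro x hx
      have h1 : (V ^ k) x ∈ LinearMap.ker (V : H →ₗ[ℂ] H) := by
        rw [pow_succ'] at hx
        exact hx
      have h2 := (Submodule.mem_iInf _).1 (hreg h1) (k + 1)
      obtain ⟨y, hy⟩ := h2
      have hy' : (V ^ k) (V y) = (V ^ k) x := by
        rw [pow_succ] at hy
        exact hy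
      obtain ⟨z, hz⟩ := ih (x - V y) (by rw [map_sub, hy', sub_self])
      exact ⟨z + y, by rw [map_add, hz, sub_add_cancel]⟩
  intro m _ x hx
  have hx' : (V ^ m) x = 0 := hx
  obtain ⟨y, hy⟩ := key m x hx'
  have h3 : V (S x) = x := by
    have h4 : V (S (V y)) = V y := congrArg (fun T : H →L[ℂ] H => T y) hS₂
    rw [← hy]
    exact h4
  change (V ^ (m + 1)) (S x) = 0
  rw [pow_succ]
  change (V ^ m) (V (S x)) = 0
  rw [h3, hx']
end

section
/- Let V be a partial isometry on a complex Hilbert space H such that ker V ⊆ ⋂_{n ≥ 0} range(V^n). Then V is a power partial isometry, i.e., V^n is a partial isometry for every n ≥ 1. -/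
open ContinuousLinearMap

theorem ker_pow_sub_range {H : Type*} [NormedAddCommGroup H] [InnerProductSpace ℂ H]
    (V : H →L[ℂ] H)
    (hreg : ∀ x, V x = 0 → ∀ n : ℕ, ∃ w, (V ^ n) w = x) (m : ℕ) :
    ∀ y, (V ^ m) y = 0 → ∃ z, V z = y := by
  induction m with
  | zero =>
    intro y hy
    exact ⟨0, by simpa using hy.symm⟩
  | succ m ih =>
    intro y hy
    rw [pow_succ'] at hy
    obtain ⟨w, hw⟩ := hreg ((V ^ m) y) hy (m + 1)
    rw [pow_succ] at hw
    have hw' : (V ^ m) (V w) = (V ^ m) y := hw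
    obtain ⟨z, hz⟩ := ih (y - V w) (by rw [map_sub, hw', sub_self])
    exact ⟨z + w, by rw [map_add, hz]; abel⟩

theorem inner_of_partial {H : Type*} [NormedAddCommGroup H] [InnerProductSpace ℂ H]
    [CompleteSpace H] (V : H →L[ℂ] H) (hV : IsPartialIsometry V) (x z : H)
    (hx : x ∈ (LinearMap.ker (V : H →ₗ[ℂ] H))ᗮ) (hz : z ∈ (LinearMap.ker (V : H →ₗ[ℂ] H))ᗮ) :
    inner ℂ (V z) (V x) = inner ℂ z x := by
  let f : (LinearMap.ker (V : H →ₗ[ℂ] H))ᗮ →ₗᵢ[ℂ] H :=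
    ⟨(V : H →ₗ[ℂ] H) ∘ₗ Submodule.subtype _, fun u => hV u.1 u.2⟩
  exact f.inner_map_map ⟨z, hz⟩ ⟨x, hx⟩

theorem stmt_13 {H : Type*} [NormedAddCommGroup H] [InnerProductSpace ℂ H] [CompleteSpace H]
    (V : H →L[ℂ] H) (hV : IsPartialIsometry V)
    (hreg : LinearMap.ker (V : H →ₗ[ℂ] H) ≤ ⨅ n : ℕ, LinearMap.range ((V ^ n : H →L[ℂ] H) : H →ₗ[ℂ] H)) :
    ∀ n : ℕ, 1 ≤ n → IsPartialIsometry (V ^ n) := by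
  have hreg' : ∀ x, V x = 0 → ∀ n : ℕ, ∃ w, (V ^ n) w = x := by
    intro x hx n
    have h := hreg (show x ∈ LinearMap.ker (V : H →ₗ[ℂ] H) from hx)
    rw [Submodule.mem_iInf] at h
    exact h n
  intro n _
  clear * - hV hreg'
  induction n with
  | zero => intro x _; simp
  | succ n ih =>
    intro x hx
    have hpow : ∀ u, (V ^ (n + 1)) u = (V ^ n) (V u) := fun u => by rw [pow_succ]; rfl
    have hx0 : ∀ u, (V ^ (n + 1)) u = 0 → inner ℂ u x = 0 := fun u hu =>
      (Submodule.mem_orthogonal _ _).1 hx u hu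
    have hxK : x ∈ (LinearMap.ker (V : H →ₗ[ℂ] H))ᗮ := by
      rw [Submodule.mem_orthogonal]
      intro u hu
      have hu' : V u = 0 := hu
      exact hx0 u (by rw [hpow, hu', map_zero])
    rw [hpow, ih (V x) ?_, hV x hxK]
    rw [Submodule.mem_orthogonal]
    intro y hy
    have hy' : (V ^ n) y = 0 := hy
    obtain ⟨z, rfl⟩ := ker_pow_sub_range V hreg' n y hy'
    have : CompleteSpace (LinearMap.ker (V : H →ₗ[ℂ] H)) :=
      (ContinuousLinearMap.isClosed_ker V).completeSpace_coe
    obtain ⟨a, ha, b, hb, rfl⟩ :=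
      Submodule.exists_add_mem_mem_orthogonal (K := LinearMap.ker (V : H →ₗ[ℂ] H)) z
    have ha' : V a = 0 := ha
    rw [map_add, ha', zero_add] at hy' ⊢
    rw [inner_of_partial V hV x b hxK hb]
    exact hx0 b (by rw [hpow, hy'])
end

section
/- Let V be a partial isometry on a complex Hilbert space H such that ker V ⊆ ⋂_{n ≥ 0} range(V^n). Then H decomposes as the orthogonal direct sum H = M ⊕ R^∞, where R^∞ = ⋂_{n ≥ 0} range(V^n) and M is the closure of the linear span of ⋃_{n ≥ 0} V^n((range V)^⊥); that is, M and R^∞ are closed subspaces that are orthogonal complements of each other in H. -/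
open ContinuousLinearMap

theorem pi_inner {H : Type*} [NormedAddCommGroup H] [InnerProductSpace ℂ H] [CompleteSpace H]
    (V : H →L[ℂ] H) (hV : IsPartialIsometry V) (u y : H)
    (hy : y ∈ (LinearMap.ker (V : H →ₗ[ℂ] H))ᗮ) : inner ℂ (V u) (V y) = inner ℂ u y := by
  haveI : CompleteSpace (LinearMap.ker (V : H →ₗ[ℂ] H)) :=
    (ContinuousLinearMap.isClosed_ker V).completeSpace_coe
  obtain ⟨a, ha, b, hb, rfl⟩ :=
    (LinearMap.ker (V : H →ₗ[ℂ] H)).exists_add_mem_mem_orthogonal u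
  have ha' : V a = 0 := ha
  let L : (LinearMap.ker (V : H →ₗ[ℂ] H))ᗮ →ₗᵢ[ℂ] H :=
    { toLinearMap := (V : H →ₗ[ℂ] H).comp (Submodule.subtype _)
      norm_map' := fun x => hV x.1 x.2 }
  have h := L.inner_map_map ⟨b, hb⟩ ⟨y, hy⟩
  have h' : inner ℂ (V b) (V y) = inner ℂ b y := h
  rw [map_add, ha', zero_add, h', inner_add_left, hy a ha, zero_add]

theorem pi_lift {H : Type*} [NormedAddCommGroup H] [InnerProductSpace ℂ H] [CompleteSpace H]
    (V : H →L[ℂ] H) (y : H) :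
    ∃ b ∈ (LinearMap.ker (V : H →ₗ[ℂ] H))ᗮ, V b = V y := by
  haveI : CompleteSpace (LinearMap.ker (V : H →ₗ[ℂ] H)) :=
    (ContinuousLinearMap.isClosed_ker V).completeSpace_coe
  obtain ⟨a, ha, b, hb, rfl⟩ :=
    (LinearMap.ker (V : H →ₗ[ℂ] H)).exists_add_mem_mem_orthogonal y
  have ha' : V a = 0 := ha
  exact ⟨b, hb, by rw [map_add, ha', zero_add]⟩

theorem pi_range {H : Type*} [NormedAddCommGroup H] [InnerProductSpace ℂ H] [CompleteSpace H]
    (V : H →L[ℂ] H) (hV : IsPartialIsometry V) :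
    (LinearMap.range (V : H →ₗ[ℂ] H))ᗮᗮ = LinearMap.range (V : H →ₗ[ℂ] H) := by
  let L : (LinearMap.ker (V : H →ₗ[ℂ] H))ᗮ →ₗᵢ[ℂ] H :=
    { toLinearMap := (V : H →ₗ[ℂ] H).comp (Submodule.subtype _)
      norm_map' := fun x => hV x.1 x.2 }
  have hc : IsClosed (Set.range L) := L.isometry.isClosedEmbedding.isClosed_range
  have he : ((LinearMap.range (V : H →ₗ[ℂ] H) : Submodule ℂ H) : Set H) = Set.range L := by
    ext x
    constructor
    · rintro ⟨y, rfl⟩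
      obtain ⟨b, hb, h⟩ := pi_lift V y
      exact ⟨⟨b, hb⟩, h⟩
    · rintro ⟨y, rfl⟩
      exact ⟨y.1, rfl⟩
  rw [Submodule.orthogonal_orthogonal_eq_closure]
  apply IsClosed.submodule_topologicalClosure_eq
  rw [he]
  exact hc

theorem pi_key {H : Type*} [NormedAddCommGroup H] [InnerProductSpace ℂ H] [CompleteSpace H]
    (V : H →L[ℂ] H) (hV : IsPartialIsometry V)
    (hreg : ∀ z, V z = 0 → ∀ n : ℕ, ∃ y, (V ^ n) y = z) (n : ℕ) :
    ∀ x, (∃ y, (V ^ (n + 1)) y = x) ↔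
      ∀ k ≤ n, ∀ w ∈ (LinearMap.range (V : H →ₗ[ℂ] H))ᗮ, inner ℂ ((V ^ k) w) x = 0 := by
  have base : ∀ x, (∃ y, V y = x) ↔
      ∀ w ∈ (LinearMap.range (V : H →ₗ[ℂ] H))ᗮ, inner ℂ w x = 0 := by
    intro x
    rw [← Submodule.mem_orthogonal, pi_range V hV]
    rfl
  induction n with
  | zero =>
    intro x
    simpa using base x
  | succ n ih =>
    have hN : ∀ k ≤ n, ∀ w ∈ (LinearMap.range (V : H →ₗ[ℂ] H))ᗮ,
        (V ^ k) w ∈ (LinearMap.ker (V : H →ₗ[ℂ] H))ᗮ := by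
      intro k hk w hw
      rw [Submodule.mem_orthogonal']
      intro z hz
      exact (ih z).1 (hreg z hz _) k hk w hw
    intro x
    constructor
    · rintro ⟨y, rfl⟩ k hk w hw
      rw [pow_succ' V (n + 1), ContinuousLinearMap.mul_apply]
      cases k with
      | zero => exact (base _).1 ⟨_, rfl⟩ w hw
      | succ k =>
        have hk' : k ≤ n := by omega
        rw [pow_succ' V k, ContinuousLinearMap.mul_apply, ← inner_conj_symm,
          pi_inner V hV _ _ (hN k hk' w hw), inner_conj_symm]
        exact (ih _).1 ⟨y, rfl⟩ k hk' w hw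
    · intro h
      obtain ⟨y, rfl⟩ := (base x).2 (fun w hw => by simpa using h 0 (by omega) w hw)
      obtain ⟨b, hb, hby⟩ := pi_lift V y
      rw [← hby] at h ⊢
      obtain ⟨c, rfl⟩ := (ih b).2 (fun k hk w hw => by
        have := h (k + 1) (by omega) w hw
        rwa [pow_succ' V k, ContinuousLinearMap.mul_apply, pi_inner V hV _ _ hb] at this)
      exact ⟨c, by rw [pow_succ' V (n + 1), ContinuousLinearMap.mul_apply]⟩

theorem stmt_15 {H : Type*} [NormedAddCommGroup H] [InnerProductSpace ℂ H] [CompleteSpace H]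
    (V : H →L[ℂ] H) (hV : IsPartialIsometry V)
    (hreg : LinearMap.ker (V : H →ₗ[ℂ] H) ≤ ⨅ n : ℕ, LinearMap.range ((V ^ n : H →L[ℂ] H) : H →ₗ[ℂ] H))
    (Rinf M : Submodule ℂ H)
    (hRinf : Rinf = ⨅ n : ℕ, LinearMap.range ((V ^ n : H →L[ℂ] H) : H →ₗ[ℂ] H))
    (hM : M = (Submodule.span ℂ
      (⋃ n : ℕ, (V ^ n) '' ((LinearMap.range (V : H →ₗ[ℂ] H))ᗮ : Set H))).topologicalClosure) :
    M = Rinfᗮ ∧ Rinf = Mᗮ := by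
  have hreg' : ∀ z, V z = 0 → ∀ n : ℕ, ∃ y, (V ^ n) y = z := by
    intro z hz n
    exact (Submodule.mem_iInf _).1 (hreg hz) n
  have key := pi_key V hV hreg'
  have h2 : Rinf = Mᗮ := by
    rw [hM, Submodule.orthogonal_closure, hRinf]
    ext x
    rw [Submodule.mem_iInf]
    constructor
    · intro h
      rw [Submodule.mem_orthogonal]
      intro u hu
      induction hu using Submodule.span_induction with
      | mem u hu =>
        obtain ⟨n, w, hw, rfl⟩ := Set.mem_iUnion.1 hu
        exact (key n x).1 (h (n + 1)) n le_rfl w hw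
      | zero => simp
      | add a b _ _ ha hb => rw [inner_add_left, ha, hb, add_zero]
      | smul c a _ ha => rw [inner_smul_left, ha, mul_zero]
    · intro h n
      cases n with
      | zero => exact ⟨x, by simp⟩
      | succ n =>
        exact (key n x).2 fun k _ w hw =>
          h _ (Submodule.subset_span (Set.mem_iUnion.2 ⟨k, w, hw, rfl⟩))
  refine ⟨?_, h2⟩
  rw [h2, Submodule.orthogonal_orthogonal_eq_closure]
  symm
  apply IsClosed.submodule_topologicalClosure_eq
  rw [hM]
  exact Submodule.isClosed_topologicalClosure _
end

section
/- Fix n ≥ 1 and i ∈ {1,…,n}. Let H = ℓ²(ℕ, ℂ) with standard orthonormal basis (e_m)_{m ≥ 0}, let (w_m)_{m ≥ 0} be a bounded sequence of nonnegative real numbers, let B ⊆ ℕ, and set α_m = 0 if m ∈ B and α_m = 1 if m ∉ B. Let V be a bounded linear operator on H satisfying V e_m = w_m α_m e_{nm+i} for every m ≥ 0. If V is a partial isometry, then V is a power partial isometry, i.e., V^k is a partial isometry for every k ≥ 1. -/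
open ContinuousLinearMap

noncomputable abbrev L2s := lp (fun _ : ℕ => ℂ) 2

lemma l2s_ext {E : Type*} [NormedAddCommGroup E] [NormedSpace ℂ E] (S T : L2s →L[ℂ] E)
    (h : ∀ m, S (lp.single 2 m (1 : ℂ)) = T (lp.single 2 m (1 : ℂ))) (x : L2s) : S x = T x := by
  have hx := lp.hasSum_single (p := 2) (by norm_num) x
  have h1 := S.hasSum hx
  have h2 := T.hasSum hx
  refine h1.unique ?_
  convert h2 using 2 with m
  have : lp.single 2 m (x m) = (x m) • (lp.single 2 m (1 : ℂ) : L2s) := by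
    rw [← lp.single_smul]; simp
  simp only [this, map_smul, h]

noncomputable def coordL (j : ℕ) : L2s →L[ℂ] ℂ := innerSL ℂ (lp.single 2 j (1 : ℂ) : L2s)

lemma coordL_apply (j : ℕ) (x : L2s) : coordL j x = x j := by
  simp [coordL, lp.inner_single_left]

lemma shift_coord (g : ℕ → ℕ) (hg : Function.Injective g) (c : ℕ → ℂ) (V : L2s →L[ℂ] L2s)
    (hV : ∀ m, V (lp.single 2 m (1 : ℂ)) = c m • lp.single 2 (g m) (1 : ℂ)) (x : L2s) (m : ℕ) :
    V x (g m) = c m * x m := by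
  have := l2s_ext ((coordL (g m)).comp V) (c m • coordL m) (fun l => by
    simp only [ContinuousLinearMap.comp_apply, ContinuousLinearMap.smul_apply, coordL_apply, hV]
    by_cases h : m = l
    · subst h; simp
    · have h' : g m ≠ g l := fun e => h (hg e)
      simp [lp.single_apply, Pi.single_apply, h, h']) x
  simpa [coordL_apply] using this

lemma shift_coord_zero (g : ℕ → ℕ) (c : ℕ → ℂ) (V : L2s →L[ℂ] L2s)
    (hV : ∀ m, V (lp.single 2 m (1 : ℂ)) = c m • lp.single 2 (g m) (1 : ℂ)) (x : L2s) (j : ℕ)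
    (hj : j ∉ Set.range g) : V x j = 0 := by
  have := l2s_ext ((coordL j).comp V) 0 (fun l => by
    simp only [ContinuousLinearMap.comp_apply, coordL_apply, hV]
    have h' : j ≠ g l := fun e => hj ⟨l, e.symm⟩
    simp [lp.single_apply, Pi.single_apply, h']) x
  simpa [coordL_apply] using this

lemma shift_pi (g : ℕ → ℕ) (hg : Function.Injective g) (c : ℕ → ℂ) (V : L2s →L[ℂ] L2s)
    (hV : ∀ m, V (lp.single 2 m (1 : ℂ)) = c m • lp.single 2 (g m) (1 : ℂ))
    (hc : ∀ m, c m = 0 ∨ c m = 1) : IsPartialIsometry V := by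
  intro x hx
  have key : ∀ m, V x (g m) = x m := by
    intro m
    rw [shift_coord g hg c V hV]
    rcases hc m with h | h
    · have h0 : (lp.single 2 m (1 : ℂ) : L2s) ∈ LinearMap.ker (V : L2s →ₗ[ℂ] L2s) := by
        simp [LinearMap.mem_ker, hV, h]
      have := (Submodule.mem_orthogonal _ _).1 hx _ h0
      have h2 := coordL_apply m x
      simp only [coordL, innerSL_apply_apply] at h2
      rw [h, ← h2, this, mul_zero]
    · rw [h, one_mul]
  have h2 : (0:ℝ) < (2 : ENNReal).toReal := by norm_num
  have e1 := lp.norm_rpow_eq_tsum h2 (V x)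
  have e2 := lp.norm_rpow_eq_tsum h2 x
  have e3 : ∑' j, ‖V x j‖ ^ (2 : ENNReal).toReal = ∑' m, ‖x m‖ ^ (2 : ENNReal).toReal := by
    rw [← hg.tsum_eq]
    · simp only [key]
    · intro j hj
      by_contra hjr
      apply hj
      simp [shift_coord_zero g c V hV x j hjr]
  rw [e3, ← e2] at e1
  exact (Real.rpow_left_inj (norm_nonneg _) (norm_nonneg _) h2.ne').1 e1

lemma shift_weights (g : ℕ → ℕ) (hg : Function.Injective g) (c : ℕ → ℝ) (hc : ∀ m, 0 ≤ c m)
    (V : L2s →L[ℂ] L2s)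
    (hV : ∀ m, V (lp.single 2 m (1 : ℂ)) = (c m : ℂ) • lp.single 2 (g m) (1 : ℂ))
    (hpi : IsPartialIsometry V) (m : ℕ) : (c m : ℂ) = 0 ∨ (c m : ℂ) = 1 := by
  by_cases h : (c m : ℂ) = 0
  · exact Or.inl h
  right
  have hm : (lp.single 2 m (1 : ℂ) : L2s) ∈ (LinearMap.ker (V : L2s →ₗ[ℂ] L2s))ᗮ := by
    rw [Submodule.mem_orthogonal']
    intro u hu
    have hu' : V u = 0 := hu
    have h1 := shift_coord g hg _ V hV u m
    have h2 := coordL_apply m u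
    simp only [coordL, innerSL_apply_apply] at h2
    rw [h2]
    rw [hu'] at h1
    simpa [h] using h1.symm
  have := hpi _ hm
  rw [hV, norm_smul, lp.norm_single (by norm_num), lp.norm_single (by norm_num)] at this
  simp only [Complex.norm_real, norm_one, mul_one, Real.norm_eq_abs, abs_of_nonneg (hc m)] at this
  simp [this]

lemma shift_pow (g : ℕ → ℕ) (c : ℕ → ℂ) (V : L2s →L[ℂ] L2s)
    (hV : ∀ m, V (lp.single 2 m (1 : ℂ)) = c m • lp.single 2 (g m) (1 : ℂ))
    (hc : ∀ m, c m = 0 ∨ c m = 1) (k : ℕ) : ∃ d : ℕ → ℂ, (∀ m, d m = 0 ∨ d m = 1) ∧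
      ∀ m, (V ^ k) (lp.single 2 m (1 : ℂ)) = d m • lp.single 2 (g^[k] m) (1 : ℂ) := by
  induction k with
  | zero => exact ⟨fun _ => 1, fun _ => Or.inr rfl, fun m => by simp⟩
  | succ k ih =>
    obtain ⟨d, hd, h⟩ := ih
    refine ⟨fun m => d m * c (g^[k] m), fun m => ?_, fun m => ?_⟩
    · rcases hd m with h1 | h1 <;> rcases hc (g^[k] m) with h2 | h2 <;> simp [h1, h2]
    · rw [pow_succ', ContinuousLinearMap.mul_apply, h, map_smul, hV, smul_smul,
        Function.iterate_succ_apply']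

theorem stmt_17 (n : ℕ) (hn : 1 ≤ n) (i : ℕ) (hi : i ∈ Finset.Icc 1 n)
    (w : ℕ → ℝ) (hw_nonneg : ∀ m, 0 ≤ w m) (hw_bdd : ∃ C : ℝ, ∀ m, w m ≤ C)
    (B : Set ℕ) (α : ℕ → ℝ)
    (hα₀ : ∀ m ∈ B, α m = 0) (hα₁ : ∀ m ∉ B, α m = 1)
    (V : lp (fun _ : ℕ => ℂ) 2 →L[ℂ] lp (fun _ : ℕ => ℂ) 2)
    (hV : ∀ m : ℕ, V (lp.single 2 m (1 : ℂ)) =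
      ((w m * α m : ℝ) : ℂ) • lp.single 2 (n * m + i) (1 : ℂ))
    (hpi : IsPartialIsometry V) :
    ∀ k : ℕ, 1 ≤ k → IsPartialIsometry (V ^ k) := by
  intro k _
  have hg : Function.Injective (fun m : ℕ => n * m + i) := by
    intro a b h
    exact Nat.eq_of_mul_eq_mul_left hn (Nat.add_right_cancel h)
  have hc : ∀ m, 0 ≤ w m * α m := by
    intro m
    refine mul_nonneg (hw_nonneg m) ?_
    by_cases h : m ∈ B
    · rw [hα₀ m h]
    · rw [hα₁ m h]; norm_num
  have h01 := shift_weights _ hg (fun m => w m * α m) hc V hV hpi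
  obtain ⟨d, hd, h⟩ := shift_pow _ _ V hV h01 k
  exact shift_pi _ (hg.iterate k) d _ h hd
end
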